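/- arXiv:2201.01345 — 2 statements merged into one kernel-verified Lean document; each statement's English description precedes it below -/
import Mathlib

section
/- (Lemma 1) Let F be a field, D a finite-dimensional division algebra over F whose center is F, and R a commutative F-algebra. Let v₁, …, v_l be an F-basis of D and c₁, …, c_l ∈ R. Then every two-sided ideal of D ⊗_F R that contains the element v₁ ⊗ c₁ + ⋯ + v_l ⊗ c_l also contains the elements 1 ⊗ c₁, …, 1 ⊗ c_l. -/
open TensorProduct

/-!
A central simple algebra `A` is a simple module over `A ⊗ Aᵐᵒᵖ`, whose endomorphisms are the
scalars. By Jacobson density, any linear map `f : A → A` therefore agrees on any given finite set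
with a map `x ↦ ∑ aₖ * x * bₖ`. Since a two-sided ideal of `A ⊗ R` absorbs multiplication by
`aₖ ⊗ 1` on the left and by `bₖ ⊗ 1` on the right, it is stable under `f ⊗ id`. For linearly
independent `v`, take `f` sending `v i` to `1` and the other `v j` to `0`.
-/

section Density

attribute [local instance] instModuleTensorProductMop

section Semiring

variable {F A : Type*} [CommSemiring F] [Semiring A] [Algebra F A]

theorem tensor_mulOpposite_smul_eq_mulLeftRight (t : A ⊗[F] Aᵐᵒᵖ) (x : A) :
    t • x = AlgHom.mulLeftRight F A t x :=
  rfl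

theorem tmul_op_smul (a b x : A) : (a ⊗ₜ[F] MulOpposite.op b) • x = a * x * b := by
  rw [tensor_mulOpposite_smul_eq_mulLeftRight, AlgHom.mulLeftRight_apply, MulOpposite.unop_op]

theorem exists_forall_end_tensor_mulOpposite_apply_eq_smul [Algebra.IsCentral F A]
    (g : Module.End (A ⊗[F] Aᵐᵒᵖ) A) : ∃ k : F, ∀ x, g x = k • x := by
  have apply_eq_mul (x : A) : g x = x * g 1 := by
    simpa only [tmul_op_smul, mul_one] using g.map_smul (x ⊗ₜ[F] MulOpposite.op 1) 1
  have apply_eq_mul' (x : A) : g x = g 1 * x := by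
    simpa only [tmul_op_smul, one_mul] using g.map_smul (1 ⊗ₜ[F] MulOpposite.op x) 1
  have g_one_mem_center : g 1 ∈ Subalgebra.center F A :=
    Subalgebra.mem_center_iff.2 fun x ↦ (apply_eq_mul x).symm.trans (apply_eq_mul' x)
  obtain ⟨k, hk⟩ := (Algebra.IsCentral.mem_center_iff F).1 g_one_mem_center
  exact ⟨k, fun x ↦ by rw [apply_eq_mul', hk, Algebra.smul_def]⟩

end Semiring

section Ring

variable {F A : Type*} [CommRing F] [Ring A] [Algebra F A] [IsSimpleRing A]

theorem isSimpleModule_tensor_mulOpposite : IsSimpleModule (A ⊗[F] Aᵐᵒᵖ) A := by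
  rw [isSimpleModule_iff]
  refine { eq_bot_or_eq_top := fun N ↦ or_iff_not_imp_left.2 fun hN ↦ ?_ }
  have mul_mem_left {a x : A} (hx : x ∈ N) : a * x ∈ N := by
    simpa only [tmul_op_smul, mul_one] using N.smul_mem (a ⊗ₜ[F] MulOpposite.op 1) hx
  have mul_mem_right {x b : A} (hx : x ∈ N) : x * b ∈ N := by
    simpa only [tmul_op_smul, one_mul] using N.smul_mem (1 ⊗ₜ[F] MulOpposite.op b) hx
  let J : TwoSidedIdeal A :=
    .mk' N N.zero_mem N.add_mem N.neg_mem mul_mem_left mul_mem_right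
  have mem_J {x : A} : x ∈ J ↔ x ∈ N := TwoSidedIdeal.mem_mk' ..
  obtain ⟨x, hxN, hx⟩ := N.ne_bot_iff.1 hN
  have one_mem : (1 : A) ∈ N := mem_J.1 (IsSimpleRing.one_mem_of_ne_zero_mem J hx (mem_J.2 hxN))
  exact N.eq_top_iff'.2 fun y ↦ by simpa only [mul_one] using mul_mem_left (a := y) one_mem

theorem exists_mulLeftRight_eqOn [Algebra.IsCentral F A] (f : A →ₗ[F] A) (s : Finset A) :
    ∃ t : A ⊗[F] Aᵐᵒᵖ, Set.EqOn f (AlgHom.mulLeftRight F A t) s := by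
  have := isSimpleModule_tensor_mulOpposite (F := F) (A := A)
  let biendomorphism : Module.End (Module.End (A ⊗[F] Aᵐᵒᵖ) A) A :=
    { f with
      map_smul' := fun g x ↦ by
        obtain ⟨k, hk⟩ := exists_forall_end_tensor_mulOpposite_apply_eq_smul g
        simp [hk] }
  obtain ⟨t, ht⟩ := jacobson_density biendomorphism s
  exact ⟨t, fun x hx ↦ (ht x hx).trans (tensor_mulOpposite_smul_eq_mulLeftRight t x)⟩

end Ring

end Density

section TwoSided

variable {F A R : Type*} [CommSemiring F] [Semiring A] [Algebra F A]
  [Semiring R] [Algebra F R] {I : Ideal (A ⊗[F] R)} [I.IsTwoSided] {x : A ⊗[F] R}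

theorem rTensor_mulLeftRight_tmul (a : A) (b : Aᵐᵒᵖ) (x : A ⊗[F] R) :
    (AlgHom.mulLeftRight F A (a ⊗ₜ b)).rTensor R x = a ⊗ₜ 1 * x * b.unop ⊗ₜ 1 := by
  induction x with
  | zero => simp only [map_zero, mul_zero, zero_mul]
  | tmul y r => simp
  | add x y hx hy => rw [map_add, hx, hy, mul_add, add_mul]

theorem rTensor_mulLeftRight_mem (t : A ⊗[F] Aᵐᵒᵖ) (hx : x ∈ I) :
    (AlgHom.mulLeftRight F A t).rTensor R x ∈ I := by
  induction t with
  | zero => simp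
  | tmul a b =>
    rw [rTensor_mulLeftRight_tmul]
    exact I.mul_mem_right _ (I.mul_mem_left _ hx)
  | add t u ht hu =>
    rw [map_add, LinearMap.rTensor_add]
    exact I.add_mem ht hu

end TwoSided

theorem rTensor_mem_of_isTwoSided {F A R : Type*} [CommRing F] [Ring A] [IsSimpleRing A]
    [Algebra F A] [Algebra.IsCentral F A] [Semiring R] [Algebra F R] {I : Ideal (A ⊗[F] R)}
    [I.IsTwoSided] {x : A ⊗[F] R} (f : A →ₗ[F] A) (hx : x ∈ I) : f.rTensor R x ∈ I := by
  classical
  obtain ⟨S, hS⟩ := TensorProduct.exists_finset x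
  obtain ⟨t, ht⟩ := exists_mulLeftRight_eqOn f (S.image Prod.fst)
  have rTensor_eq : f.rTensor R x = (AlgHom.mulLeftRight F A t).rTensor R x := by
    simp only [hS, map_sum, LinearMap.rTensor_tmul]
    exact Finset.sum_congr rfl fun p hp ↦ by rw [ht (Finset.mem_image_of_mem _ hp)]
  exact rTensor_eq ▸ rTensor_mulLeftRight_mem t hx

theorem exists_linearMap_forall_apply_eq {K V W ι : Type*} [DivisionRing K]
    [AddCommGroup V] [Module K V] [AddCommGroup W] [Module K W] {v : ι → V}
    (hv : LinearIndependent K v) (w : ι → W) : ∃ f : V →ₗ[K] W, ∀ i, f (v i) = w i := by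
  obtain ⟨g, hg⟩ :=
    (Finsupp.linearCombination K v).exists_leftInverse_of_injective (LinearMap.ker_eq_bot.2 hv)
  have g_apply (i : ι) : g (v i) = Finsupp.single i 1 := by
    simpa using congr($hg (Finsupp.single i 1))
  exact ⟨Finsupp.linearCombination K w ∘ₗ g, fun i ↦ by simp [g_apply]⟩

theorem basis_coeffs_mem_of_sum_mem_general {F A R ι : Type*} [Field F]
    [Ring A] [IsSimpleRing A] [Algebra F A] [Algebra.IsCentral F A] [Semiring R] [Algebra F R]
    [Fintype ι] {v : ι → A} (hv : LinearIndependent F v) (c : ι → R)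
    (I : Ideal (A ⊗[F] R)) [I.IsTwoSided] (h : ∑ i, v i ⊗ₜ[F] c i ∈ I) (i : ι) :
    (1 : A) ⊗ₜ[F] c i ∈ I := by
  classical
  obtain ⟨f, hf⟩ := exists_linearMap_forall_apply_eq hv (Pi.single i (1 : A))
  have rTensor_sum : f.rTensor R (∑ j, v j ⊗ₜ[F] c j) = 1 ⊗ₜ c i := by
    simp only [map_sum, LinearMap.rTensor_tmul, hf, Pi.single_apply, ite_tmul,
      Finset.sum_ite_eq', Finset.mem_univ, if_true]
  exact rTensor_sum ▸ rTensor_mem_of_isTwoSided f h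

/-- **Lemma 1.** Let `D` be a finite-dimensional central division algebra over a field `F`,
`R` a commutative `F`-algebra, `v 0, …, v (l-1)` an `F`-basis of `D` and
`c 0, …, c (l-1) ∈ R`.  Every two-sided ideal of `D ⊗_F R` (here: a left ideal `I`, in
Mathlib's sense, which is moreover closed under right multiplication) containing
`∑ i, v i ⊗ c i` contains every `1 ⊗ c i`. -/
theorem basis_coeffs_mem_of_sum_mem
    (F : Type*) [Field F] (D : Type*) [DivisionRing D] [Algebra F D]
    [FiniteDimensional F D] [Algebra.IsCentral F D]
    (R : Type*) [CommRing R] [Algebra F R] {l : ℕ}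
    (v : Module.Basis (Fin l) F D) (c : Fin l → R)
    (I : Ideal (D ⊗[F] R)) (hI : ∀ x ∈ I, ∀ y : D ⊗[F] R, x * y ∈ I)
    (h : (∑ i, v i ⊗ₜ[F] c i) ∈ I) :
    ∀ i, ((1 : D) ⊗ₜ[F] c i) ∈ I := by
  have : I.IsTwoSided := ⟨fun y hx ↦ hI _ hx y⟩
  exact basis_coeffs_mem_of_sum_mem_general v.linearIndependent c I h
end

section
/- (Lemma 2, quaternionic form) Let R be a commutative ℝ-algebra and for an ideal J of R let Q(J) denote the two-sided ideal of the quaternion algebra ℍ ⊗_ℝ R (quaternions with components in R, with involution given by quaternionic conjugation, trivial on R) consisting of all quaternions whose four components lie in J. Let I be an ideal of R such that Q(I) is real, i.e., w₁*w₁ + ⋯ + w_k*w_k ∈ Q(I) implies w₁, …, w_k ∈ Q(I). If p is a prime ideal of R that is minimal among the prime ideals of R containing I, then Q(p) is real. -/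
/-- For an ideal `J` of a commutative ring `R`, the set `Q(J)` of quaternions with
components in `R` all four of whose components lie in `J`; it is a two-sided ideal of
`ℍ ⊗_ℝ R = Quaternion R`. -/
def quatIdeal {R : Type*} [CommRing R] (J : Ideal R) : Set (Quaternion R) :=
  {q | q.re ∈ J ∧ q.imI ∈ J ∧ q.imJ ∈ J ∧ q.imK ∈ J}

/-- A set `P` of quaternions over `R` is a *real* (two-sided) ideal if whenever
`star (w 0) * w 0 + ⋯ + star (w (k-1)) * w (k-1) ∈ P`, each `w i ∈ P`.
(Here `star` is quaternionic conjugation, trivial on `R`.) -/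
def IsRealQuatSet {R : Type*} [CommRing R] (P : Set (Quaternion R)) : Prop :=
  ∀ (k : ℕ) (w : Fin k → Quaternion R), (∑ i, star (w i) * w i) ∈ P → ∀ i, w i ∈ P

/-!
`Q(J)` is real exactly when `R ⧸ J` is formally real: the norm of a quaternion is the sum of the
squares of its components, and conversely a sum of squares of scalars is a sum of norms. So the
claim is about commutative rings. Since `R ⧸ I` is formally real, `I` is radical, so every element
`a ^ 2 + s` of a prime `p` minimal over `I` is multiplied into `I` by some `t ∉ p`. If `s` is a sum
of squares, then so is `t ^ 2 * s`, and `(t * a) ^ 2 + t ^ 2 * s ∈ I` gives `t * a ∈ I ≤ p`, whence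
`a ∈ p`.
-/

section SumsOfSquares

theorem isSumSq_iff_exists_fin_sum {R : Type*} [AddCommMonoid R] [Mul R] {s : R} :
    IsSumSq s ↔ ∃ (k : ℕ) (a : Fin k → R), s = ∑ i, a i * a i := by
  constructor
  · intro hs
    induction hs with
    | zero => exact ⟨0, Fin.elim0, by simp⟩
    | sq_add b _ ih =>
      obtain ⟨k, a, rfl⟩ := ih
      exact ⟨k + 1, Fin.cons b a, by simp [Fin.sum_univ_succ]⟩
  · rintro ⟨k, a, rfl⟩
    exact IsSumSq.sum_mul_self _ a

variable {R S F : Type*} [NonUnitalNonAssocSemiring R] [NonUnitalNonAssocSemiring S]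
  [FunLike F R S] [NonUnitalRingHomClass F R S]

theorem isSumSq_map (f : F) {s : R} (hs : IsSumSq s) : IsSumSq (f s) := by
  induction hs with
  | zero => simp
  | sq_add a _ ih => simpa only [map_add, map_mul] using ih.sq_add (f a)

theorem exists_isSumSq_map_eq {f : F} (hf : Function.Surjective f) {s : S} (hs : IsSumSq s) :
    ∃ t, IsSumSq t ∧ f t = s := by
  induction hs with
  | zero => exact ⟨0, .zero, map_zero f⟩
  | sq_add b _ ih =>
    obtain ⟨a, rfl⟩ := hf b
    obtain ⟨t, ht, rfl⟩ := ih
    exact ⟨a * a + t, ht.sq_add a, by simp only [map_add, map_mul]⟩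

end SumsOfSquares

section MinimalPrimes

variable {R : Type*} [CommSemiring R] {I p : Ideal R}

theorem exists_notMem_mul_pow_mem_of_mem_minimalPrimes (hp : p ∈ I.minimalPrimes) {x : R}
    (hx : x ∈ p) : ∃ t ∉ p, ∃ n : ℕ, t * x ^ n ∈ I := by
  have := hp.isPrime
  let A := Localization.AtPrime p
  have hxA : algebraMap R A x ∈ (I.map (algebraMap R A)).radical := by
    rw [IsLocalization.AtPrime.radical_map_of_mem_minimalPrimes A p I hp]
    exact Ideal.mem_map_of_mem _ hx
  obtain ⟨n, hn⟩ := hxA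
  rw [← map_pow, IsLocalization.algebraMap_mem_map_algebraMap_iff p.primeCompl] at hn
  obtain ⟨t, ht, htx⟩ := hn
  exact ⟨t, ht, n, htx⟩

theorem exists_notMem_mul_mem_of_mem_minimalPrimes (hI : I.IsRadical) (hp : p ∈ I.minimalPrimes)
    {x : R} (hx : x ∈ p) : ∃ t ∉ p, t * x ∈ I := by
  obtain ⟨t, ht, n, htx⟩ := exists_notMem_mul_pow_mem_of_mem_minimalPrimes hp hx
  refine ⟨t, ht, hI ⟨n + 1, ?_⟩⟩
  have : (t * x) ^ (n + 1) = t ^ n * x * (t * x ^ n) := by ring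
  exact this ▸ I.mul_mem_left _ htx

end MinimalPrimes

section RealIdeals

variable {R : Type*} [CommRing R]

theorem isFormallyReal_quotient_iff {J : Ideal R} :
    IsFormallyReal (R ⧸ J) ↔ ∀ ⦃a s : R⦄, IsSumSq s → a * a + s ∈ J → a ∈ J := by
  constructor
  · intro _ a s hs h
    rw [← Ideal.Quotient.eq_zero_iff_mem, map_add, map_mul] at h
    have hsq := IsFormallyReal.eq_zero_of_add_right (.mul_self _) (isSumSq_map _ hs) h
    rw [← Ideal.Quotient.eq_zero_iff_mem]
    exact IsReduced.eq_zero _ ⟨2, by rw [sq, hsq]⟩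
  · refine fun hJ ↦ .of_eq_zero_of_eq_zero_of_mul_self_add fun {s a} hs h ↦ ?_
    obtain ⟨a, rfl⟩ := Ideal.Quotient.mk_surjective a
    obtain ⟨t, ht, rfl⟩ := exists_isSumSq_map_eq Ideal.Quotient.mk_surjective hs
    rw [← map_mul, ← map_add, Ideal.Quotient.eq_zero_iff_mem] at h
    exact Ideal.Quotient.eq_zero_iff_mem.2 (hJ ht h)

theorem isFormallyReal_quotient_of_mem_minimalPrimes {I p : Ideal R} [IsFormallyReal (R ⧸ I)]
    (hp : p ∈ I.minimalPrimes) : IsFormallyReal (R ⧸ p) := by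
  have hI : I.IsRadical := I.isRadical_iff_quotient_reduced.2 inferInstance
  refine isFormallyReal_quotient_iff.2 fun a s hs has ↦ ?_
  obtain ⟨t, ht, htas⟩ := exists_notMem_mul_mem_of_mem_minimalPrimes hI hp has
  have hsum : t * a * (t * a) + t * t * s ∈ I := by
    convert I.mul_mem_left t htas using 1
    ring
  have hta : t * a ∈ I := isFormallyReal_quotient_iff.1 ‹_› ((IsSumSq.mul_self t).mul hs) hsum
  exact (hp.isPrime.mem_or_mem (hp.le hta)).resolve_left ht

end RealIdeals

section QuaternionIdeals

variable {R : Type*} [CommRing R] {J : Ideal R}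

theorem coe_mem_quatIdeal {r : R} : (r : Quaternion R) ∈ quatIdeal J ↔ r ∈ J := by
  simp [quatIdeal]

theorem isSumSq_normSq (q : Quaternion R) : IsSumSq (Quaternion.normSq q) := by
  rw [Quaternion.normSq_def']
  exact (((IsSquare.sq _).isSumSq.add (IsSquare.sq _).isSumSq).add (IsSquare.sq _).isSumSq).add
    (IsSquare.sq _).isSumSq

theorem sum_star_mul_self_eq_coe {ι : Type*} (t : Finset ι) (w : ι → Quaternion R) :
    ∑ i ∈ t, star (w i) * w i = ((∑ i ∈ t, Quaternion.normSq (w i) : R) : Quaternion R) := by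
  simp_rw [Quaternion.star_mul_self]
  exact (map_sum (algebraMap R (Quaternion R)) _ t).symm

theorem mem_quatIdeal_of_normSq_add_mem [hJ : IsFormallyReal (R ⧸ J)] {q : Quaternion R} {s : R}
    (hs : IsSumSq s) (h : Quaternion.normSq q + s ∈ J) : q ∈ quatIdeal J := by
  rw [isFormallyReal_quotient_iff] at hJ
  rw [Quaternion.normSq_def'] at h
  have mem_of_add_three {a b c d : R} (h : a * a + (b * b + (c * c + (d * d + s))) ∈ J) : a ∈ J :=
    hJ (((hs.sq_add d).sq_add c).sq_add b) h
  refine ⟨mem_of_add_three (b := q.imI) (c := q.imJ) (d := q.imK) ?_,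
    mem_of_add_three (b := q.re) (c := q.imJ) (d := q.imK) ?_,
    mem_of_add_three (b := q.re) (c := q.imI) (d := q.imK) ?_,
    mem_of_add_three (b := q.re) (c := q.imI) (d := q.imJ) ?_⟩ <;>
  · convert h using 1
    ring

theorem isRealQuatSet_quatIdeal_iff :
    IsRealQuatSet (quatIdeal J) ↔ IsFormallyReal (R ⧸ J) := by
  constructor
  · refine fun hJ ↦ isFormallyReal_quotient_iff.2 fun a s hs h ↦ ?_
    obtain ⟨k, b, rfl⟩ := isSumSq_iff_exists_fin_sum.1 hs
    let c : Fin (k + 1) → R := Fin.cons a b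
    have hsum : ∑ i, star (c i : Quaternion R) * c i ∈ quatIdeal J := by
      rw [sum_star_mul_self_eq_coe, coe_mem_quatIdeal]
      simpa [c, Fin.sum_univ_succ, Quaternion.normSq_coe, sq] using h
    exact coe_mem_quatIdeal.1 (hJ (k + 1) (fun i ↦ c i) hsum 0)
  · intro _ k w hw i
    rw [sum_star_mul_self_eq_coe, coe_mem_quatIdeal,
      ← Finset.add_sum_erase _ _ (Finset.mem_univ i)] at hw
    exact mem_quatIdeal_of_normSq_add_mem (IsSumSq.sum fun j _ ↦ isSumSq_normSq (w j)) hw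

end QuaternionIdeals

theorem quatIdeal_minimalPrime_real_general {R : Type*} [CommRing R] {I p : Ideal R}
    (hI : IsRealQuatSet (quatIdeal I)) (hp : p ∈ I.minimalPrimes) :
    IsRealQuatSet (quatIdeal p) := by
  rw [isRealQuatSet_quatIdeal_iff] at hI ⊢
  exact isFormallyReal_quotient_of_mem_minimalPrimes hp

/-- **Lemma 2 (quaternionic form).** Let `R` be a commutative `ℝ`-algebra and `I` an ideal
of `R` such that the two-sided ideal `Q(I)` of `Quaternion R` is real.  If `p` is a prime
ideal of `R` minimal among primes containing `I`, then `Q(p)` is real. -/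
theorem quatIdeal_minimalPrime_real
    (R : Type*) [CommRing R] [Algebra ℝ R] (I : Ideal R)
    (hI : IsRealQuatSet (quatIdeal I))
    (p : Ideal R) (hp : p.IsPrime) (hIp : I ≤ p)
    (hmin : ∀ q : Ideal R, q.IsPrime → I ≤ q → q ≤ p → q = p) :
    IsRealQuatSet (quatIdeal p) :=
  quatIdeal_minimalPrime_real_general hI ⟨⟨hp, hIp⟩, fun q hq hqp ↦ (hmin q hq.1 hq.2 hqp).ge⟩
end
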